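/- arXiv:2302.07098 — 2 statements merged into one kernel-verified Lean document; each statement's English description precedes it below -/
import Mathlib

section
/- Let β ∈ ℝ be such that β/π is irrational, let α ∈ ℝ, and let k be a nonnegative integer. Then lim_{N→∞} (1/N^{k+1}) Σ_{n=1}^{N} n^k cos(α n + β n²) sin(α n + β n²) = 0. -/
open Filter Finset

/-!
Since `cos θ sin θ = sin (2θ) / 2`, the summand is half the imaginary part of a weighted chirp
`n ↦ exp (i (a n + b n²))` with `b / π` irrational. The correlation of a chirp with its translate
by `h ≠ 0` is a geometric progression of ratio `exp (2 i b h) ≠ 1`, so it has bounded partial sums.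
Van der Corput's argument then shows that chirps have mean zero: averaging over a window of length
`H` does not change the mean asymptotically, while vanishing correlations make the window sums have
size only `√H` in mean square. Summation by parts inserts the monotone weight.
-/

section ZeroMean

open Asymptotics

/-- A sequence has zero mean if its averages `(1 / N) ∑ n < N, u n` tend to zero. This is phrased as
`∑ n < N, u n = o(N)`, which avoids dividing by `N`. -/
def HasZeroMean {E : Type*} [NormedAddCommGroup E] (u : ℕ → E) : Prop :=
  (fun N : ℕ => ∑ n ∈ range N, u n) =o[atTop] (fun N : ℕ => (N : ℝ))

/-- The sum of `u` over the window of length `H` starting at `n`; comparing `u` with its window sums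
is the averaging step of van der Corput's argument. -/
def windowSum {E : Type*} [AddCommMonoid E] (H : ℕ) (u : ℕ → E) (n : ℕ) : E :=
  ∑ h ∈ range H, u (n + h)

variable {E F : Type*} [NormedAddCommGroup E] [NormedAddCommGroup F] {u v : ℕ → E} {C : ℝ}

lemma isLittleO_natCast_of_norm_le (hu : ∀ n, ‖u n‖ ≤ C) :
    u =o[atTop] (fun N : ℕ => (N : ℝ)) :=
  (isBigO_of_le' (g := fun _ => (1 : ℝ)) (c := C) atTop (by simpa using hu)).trans_isLittleO <|
    (isLittleO_const_id_atTop (1 : ℝ)).comp_tendsto tendsto_natCast_atTop_atTop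

lemma HasZeroMean.add (hu : HasZeroMean u) (hv : HasZeroMean v) :
    HasZeroMean fun n => u n + v n := by
  simpa only [HasZeroMean, sum_add_distrib] using IsLittleO.add hu hv

lemma HasZeroMean.sum {ι : Type*} {s : Finset ι} {f : ι → ℕ → E}
    (hf : ∀ i ∈ s, HasZeroMean (f i)) : HasZeroMean fun n => ∑ i ∈ s, f i n := by
  simpa only [HasZeroMean, sum_comm (t := s)] using IsLittleO.fun_sum hf

lemma HasZeroMean.map [NormedSpace ℝ E] [NormedSpace ℝ F] (hu : HasZeroMean u) (L : E →L[ℝ] F) :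
    HasZeroMean fun n => L (u n) := by
  simpa only [HasZeroMean, map_sum] using (L.isBigO_comp _ atTop).trans_isLittleO hu

lemma hasZeroMean_shift_sub (hu : ∀ n, ‖u n‖ ≤ C) (h : ℕ) :
    HasZeroMean fun n => u (n + h) - u n := by
  have norm_block_le (m : ℕ) : ‖∑ n ∈ range h, u (m + n)‖ ≤ h * C := by
    simpa using norm_sum_le_of_le (range h) fun n _ => hu (m + n)
  refine isLittleO_natCast_of_norm_le (C := h * C + h * C) fun N => ?_
  have telescope : ∑ n ∈ range N, (u (n + h) - u n) =
      ∑ n ∈ range h, u (N + n) - ∑ n ∈ range h, u (0 + n) := by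
    have split_at_N := sum_range_add u N h
    have split_at_h := sum_range_add u h N
    rw [add_comm h N, split_at_N] at split_at_h
    simp only [sum_sub_distrib, zero_add, add_comm _ h]
    rw [sub_eq_sub_iff_add_eq_add, add_comm, ← split_at_h, add_comm]
  rw [telescope]
  exact norm_sub_le_of_le (norm_block_le N) (norm_block_le 0)

lemma HasZeroMean.shift (hu : HasZeroMean u) (hC : ∀ n, ‖u n‖ ≤ C) (h : ℕ) :
    HasZeroMean fun n => u (n + h) := by
  simpa only [sub_add_cancel] using (hasZeroMean_shift_sub hC h).add hu

lemma hasZeroMean_windowSum_sub_nsmul (hu : ∀ n, ‖u n‖ ≤ C) (H : ℕ) :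
    HasZeroMean fun n => windowSum H u n - H • u n := by
  simpa only [windowSum, sum_sub_distrib, sum_const, card_range] using
    HasZeroMean.sum (s := range H) fun h _ => hasZeroMean_shift_sub hu h

lemma hasZeroMean_const_mul_pow {𝕜 : Type*} [NormedDivisionRing 𝕜] (c : 𝕜) {z : 𝕜} (hz : ‖z‖ ≤ 1)
    (hz1 : z ≠ 1) : HasZeroMean fun n => c * z ^ n := by
  refine isLittleO_natCast_of_norm_le (C := ‖c‖ * ((1 + 1) / ‖z - 1‖)) fun N => ?_
  rw [← mul_sum, geom_sum_eq hz1, norm_mul, norm_div]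
  gcongr
  exact norm_sub_le_of_le (norm_pow z N ▸ pow_le_one₀ (norm_nonneg z) hz) norm_one.le

end ZeroMean

section VanDerCorput

variable {E : Type*} [NormedAddCommGroup E] {u : ℕ → E} {C : ℝ}

lemma norm_sum_sq_le_card_mul_sum_norm_sq {ι : Type*} (s : Finset ι) (f : ι → E) :
    ‖∑ i ∈ s, f i‖ ^ 2 ≤ #s * ∑ i ∈ s, ‖f i‖ ^ 2 :=
  (pow_le_pow_left₀ (norm_nonneg _) (norm_sum_le s f) 2).trans sq_sum_le_card_mul_sum_sq

variable (𝕜 : Type*) [RCLike 𝕜] [InnerProductSpace 𝕜 E]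

lemma hasZeroMean_inner_shift_shift (hC : ∀ n, ‖u n‖ ≤ C)
    (hcorr : ∀ h, h ≠ 0 → HasZeroMean fun n => inner 𝕜 (u n) (u (n + h)))
    {h h' : ℕ} (hne : h ≠ h') : HasZeroMean fun n => inner 𝕜 (u (n + h)) (u (n + h')) := by
  wlog hlt : h < h' generalizing h h'
  · have swapped := this hne.symm (hne.lt_or_gt.resolve_left hlt)
    simpa using swapped.map (RCLike.conjCLE (K := 𝕜) : 𝕜 →L[ℝ] 𝕜)
  obtain ⟨d, rfl⟩ := Nat.exists_eq_add_of_lt hlt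
  have correlation_bounded (n : ℕ) : ‖inner 𝕜 (u n) (u (n + (d + 1)))‖ ≤ C * C :=
    (norm_inner_le_norm _ _).trans <|
      mul_le_mul (hC _) (hC _) (norm_nonneg _) ((norm_nonneg _).trans (hC n))
  simpa only [add_assoc] using (hcorr (d + 1) d.succ_ne_zero).shift correlation_bounded h

lemma norm_sum_sq_sub_sum_norm_sq {ι : Type*} (s : Finset ι) (f : ι → E) :
    ‖∑ i ∈ s, f i‖ ^ 2 - ∑ i ∈ s, ‖f i‖ ^ 2 =
      ∑ p ∈ s.offDiag, RCLike.re (inner 𝕜 (f p.1) (f p.2)) := by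
  classical
  simp only [← inner_self_eq_norm_sq (𝕜 := 𝕜), sum_inner, inner_sum, map_sum]
  rw [← sum_product', ← diag_union_offDiag, sum_union (disjoint_diag_offDiag s), sum_diag,
    add_sub_cancel_left]
  exact sum_congr rfl fun p _ => inner_re_symm (f p.2) (f p.1)

lemma hasZeroMean_norm_windowSum_sq_sub (hC : ∀ n, ‖u n‖ ≤ C)
    (hcorr : ∀ h, h ≠ 0 → HasZeroMean fun n => inner 𝕜 (u n) (u (n + h))) (H : ℕ) :
    HasZeroMean fun n => ‖windowSum H u n‖ ^ 2 - ∑ h ∈ range H, ‖u (n + h)‖ ^ 2 := by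
  simp only [windowSum, norm_sum_sq_sub_sum_norm_sq 𝕜]
  exact HasZeroMean.sum fun p hp =>
    (hasZeroMean_inner_shift_shift 𝕜 hC hcorr (mem_offDiag.mp hp).2.2).map RCLike.reCLM

lemma eventually_sum_norm_windowSum_sq_le (hC : ∀ n, ‖u n‖ ≤ C)
    (hcorr : ∀ h, h ≠ 0 → HasZeroMean fun n => inner 𝕜 (u n) (u (n + h))) (H : ℕ)
    {ε : ℝ} (hε : 0 < ε) :
    ∀ᶠ N : ℕ in atTop, ∑ n ∈ range N, ‖windowSum H u n‖ ^ 2 ≤ (H * C ^ 2 + ε) * N := by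
  filter_upwards [(hasZeroMean_norm_windowSum_sq_sub 𝕜 hC hcorr H).def hε] with N hN
  have diagonal_le : ∑ n ∈ range N, ∑ h ∈ range H, ‖u (n + h)‖ ^ 2 ≤ N * (H * C ^ 2) := by
    calc ∑ n ∈ range N, ∑ h ∈ range H, ‖u (n + h)‖ ^ 2
        ≤ ∑ _n ∈ range N, ∑ _h ∈ range H, C ^ 2 := by gcongr; exact hC _
      _ = N * (H * C ^ 2) := by simp
  rw [sum_sub_distrib, Real.norm_natCast] at hN
  linarith [(Real.le_norm_self _).trans hN]

theorem hasZeroMean_of_hasZeroMean_inner_shift (hC : ∀ n, ‖u n‖ ≤ C)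
    (hcorr : ∀ h, h ≠ 0 → HasZeroMean fun n => inner 𝕜 (u n) (u (n + h))) :
    HasZeroMean u := by
  refine Asymptotics.isLittleO_iff.mpr fun ε hε => ?_
  obtain ⟨H, hH⟩ := exists_nat_gt (4 * (C ^ 2 + 1) / ε ^ 2)
  have H_pos : (0 : ℝ) < H := lt_of_le_of_lt (by positivity) hH
  have one_le_H : (1 : ℝ) ≤ H := Nat.one_le_cast.mpr (Nat.cast_pos.mp H_pos)
  rw [div_lt_iff₀ (by positivity)] at hH
  filter_upwards [eventually_sum_norm_windowSum_sq_le 𝕜 hC hcorr H one_pos,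
    (hasZeroMean_windowSum_sub_nsmul hC H).def (show 0 < H * ε / 2 by positivity)]
    with N mean_square_le window_error_le
  rw [Real.norm_natCast] at window_error_le ⊢
  have norm_sum_windowSum_le : ‖∑ n ∈ range N, windowSum H u n‖ ≤ H * ε / 2 * N := by
    refine le_of_sq_le_sq ?_ (by positivity)
    calc ‖∑ n ∈ range N, windowSum H u n‖ ^ 2
        ≤ N * ∑ n ∈ range N, ‖windowSum H u n‖ ^ 2 := by
          simpa using norm_sum_sq_le_card_mul_sum_norm_sq (range N) (windowSum H u)
      _ ≤ N * ((H * C ^ 2 + 1) * N) := by gcongr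
      _ ≤ N * ((H * C ^ 2 + H) * N) := by gcongr
      _ = (4 * (C ^ 2 + 1)) * (H * N ^ 2 / 4) := by ring
      _ ≤ (H * ε ^ 2) * (H * N ^ 2 / 4) := by gcongr
      _ = (H * ε / 2 * N) ^ 2 := by ring
  refine le_of_mul_le_mul_left ?_ H_pos
  calc H * ‖∑ n ∈ range N, u n‖
      = ‖∑ n ∈ range N, windowSum H u n - ∑ n ∈ range N, (windowSum H u n - H • u n)‖ := by
        rw [← sum_sub_distrib]
        simp only [sub_sub_cancel, ← smul_sum, RCLike.norm_nsmul 𝕜, nsmul_eq_mul]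
    _ ≤ H * ε / 2 * N + H * ε / 2 * N := norm_sub_le_of_le norm_sum_windowSum_le window_error_le
    _ = H * (ε * N) := by ring

end VanDerCorput

section MonotoneWeights

open Asymptotics

variable {E : Type*} [NormedAddCommGroup E]

lemma eventually_forall_le_norm_le_of_isLittleO {f : ℕ → E} {g : ℕ → ℝ}
    (hfg : f =o[atTop] g) (hg : Monotone g) (hg_top : Tendsto g atTop atTop)
    {ε : ℝ} (hε : 0 < ε) : ∀ᶠ N in atTop, ∀ m ≤ N, ‖f m‖ ≤ ε * g N := by
  obtain ⟨M, hM⟩ := eventually_atTop.mp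
    ((hfg.def hε).and (hg_top.eventually_ge_atTop 0))
  have initial_le : ∀ᶠ N in atTop, ∀ m ∈ range M, ‖f m‖ ≤ ε * g N :=
    (eventually_all_finset _).mpr fun m _ =>
      (hg_top.const_mul_atTop hε).eventually_ge_atTop ‖f m‖
  filter_upwards [initial_le] with N hN m hm
  rcases lt_or_ge m M with hlt | hge
  · exact hN m (mem_range.mpr hlt)
  · obtain ⟨norm_le, g_nonneg⟩ := hM m hge
    rw [Real.norm_of_nonneg g_nonneg] at norm_le
    exact norm_le.trans (mul_le_mul_of_nonneg_left (hg hm) hε.le)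

variable [NormedSpace ℝ E] {u : ℕ → E} {w : ℕ → ℝ}

lemma norm_sum_range_succ_smul_le_of_monotone (hw : Monotone w) (hw₀ : 0 ≤ w 0) {N : ℕ} {B : ℝ}
    (hB : ∀ m ≤ N, ‖∑ n ∈ range (m + 1), u n‖ ≤ B) :
    ‖∑ n ∈ range (N + 1), w n • u n‖ ≤ 2 * B * w N := by
  have B_nonneg : 0 ≤ B := (norm_nonneg _).trans (hB 0 N.zero_le)
  have boundary_le : ‖w N • ∑ n ∈ range (N + 1), u n‖ ≤ w N * B := by
    rw [norm_smul, Real.norm_of_nonneg (hw₀.trans (hw N.zero_le))]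
    exact mul_le_mul_of_nonneg_left (hB N le_rfl) (hw₀.trans (hw N.zero_le))
  have increment_le (m : ℕ) (hm : m ∈ range N) :
      ‖(w (m + 1) - w m) • ∑ n ∈ range (m + 1), u n‖ ≤ (w (m + 1) - w m) * B := by
    have increment_nonneg : 0 ≤ w (m + 1) - w m := sub_nonneg.mpr (hw m.le_succ)
    rw [norm_smul, Real.norm_of_nonneg increment_nonneg]
    exact mul_le_mul_of_nonneg_left (hB m (mem_range.mp hm).le) increment_nonneg
  rw [sum_range_by_parts, Nat.add_sub_cancel]
  calc _ ≤ w N * B + ∑ m ∈ range N, (w (m + 1) - w m) * B :=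
        norm_sub_le_of_le boundary_le (norm_sum_le_of_le _ increment_le)
    _ = 2 * B * w N - w 0 * B := by rw [← sum_mul, sum_range_sub]; ring
    _ ≤ 2 * B * w N := sub_le_self _ (mul_nonneg hw₀ B_nonneg)

lemma HasZeroMean.isLittleO_sum_range_succ_smul (hu : HasZeroMean u) (hw : Monotone w)
    (hw₀ : 0 ≤ w 0) :
    (fun N : ℕ => ∑ n ∈ range (N + 1), w n • u n) =o[atTop] (fun N : ℕ => N * w N) := by
  refine isLittleO_iff.mpr fun ε hε => ?_
  have partial_sums_le := eventually_forall_le_norm_le_of_isLittleO hu Nat.mono_cast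
    tendsto_natCast_atTop_atTop (show 0 < ε / 4 by positivity)
  filter_upwards [(tendsto_add_atTop_nat 1).eventually partial_sums_le, eventually_ge_atTop 1]
    with N hN one_le_N
  have hwN : 0 ≤ w N := hw₀.trans (hw N.zero_le)
  have succ_le : ((N + 1 : ℕ) : ℝ) ≤ 2 * N := by exact_mod_cast (by lia : N + 1 ≤ 2 * N)
  rw [Real.norm_of_nonneg (by positivity)]
  calc ‖∑ n ∈ range (N + 1), w n • u n‖
      ≤ 2 * (ε / 4 * (N + 1 : ℕ)) * w N :=
        norm_sum_range_succ_smul_le_of_monotone hw hw₀ fun m hm => hN (m + 1) (by lia)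
    _ ≤ 2 * (ε / 4 * (2 * N)) * w N := by gcongr
    _ = ε * (N * w N) := by ring

end MonotoneWeights

section Chirp

/-- The chirp with frequency `a` and chirp rate `b`, i.e. `n ↦ exp (i (a n + b n²))`. -/
noncomputable def chirp (a b : ℝ) (n : ℕ) : ℂ :=
  Complex.exp ((a * n + b * n ^ 2 : ℝ) * Complex.I)

variable (a b : ℝ)

lemma norm_chirp (n : ℕ) : ‖chirp a b n‖ = 1 :=
  Complex.norm_exp_ofReal_mul_I _

lemma inner_chirp_chirp_add (n h : ℕ) :
    inner ℂ (chirp a b n) (chirp a b (n + h)) =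
      chirp a b h * Complex.exp ((2 * b * h : ℝ) * Complex.I) ^ n := by
  simp only [chirp, RCLike.inner_apply', ← Complex.exp_conj, ← Complex.exp_nat_mul,
    ← Complex.exp_add, map_mul, Complex.conj_I, Complex.conj_ofReal]
  congr 1
  push_cast
  ring

lemma im_chirp_two_mul_div_two (n : ℕ) :
    (chirp (2 * a) (2 * b) n).im / 2 =
      Real.cos (a * n + b * n ^ 2) * Real.sin (a * n + b * n ^ 2) := by
  rw [chirp, Complex.exp_ofReal_mul_I_im, mul_assoc, mul_assoc, ← mul_add, Real.sin_two_mul]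
  ring

variable {b}

lemma exp_two_mul_mul_natCast_ne_one (hb : Irrational (b / Real.pi)) {h : ℕ} (hh : h ≠ 0) :
    Complex.exp ((2 * b * h : ℝ) * Complex.I) ≠ 1 := by
  intro hexp
  obtain ⟨m, hm⟩ := Complex.exp_eq_one_iff.mp hexp
  have phase_eq : 2 * b * h = m * (2 * Real.pi) := by
    rw [← mul_assoc, mul_left_inj' Complex.I_ne_zero] at hm
    exact_mod_cast hm
  refine (hb.mul_natCast hh).ne_int m ?_
  rw [div_mul_eq_mul_div, div_eq_iff Real.pi_ne_zero]
  linarith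

theorem hasZeroMean_chirp (hb : Irrational (b / Real.pi)) : HasZeroMean (chirp a b) := by
  refine hasZeroMean_of_hasZeroMean_inner_shift ℂ (fun n => (norm_chirp a b n).le) fun h hh => ?_
  simp only [inner_chirp_chirp_add]
  exact hasZeroMean_const_mul_pow _ (Complex.norm_exp_ofReal_mul_I _).le
    (exp_two_mul_mul_natCast_ne_one hb hh)

theorem hasZeroMean_cos_mul_sin (hb : Irrational (b / Real.pi)) :
    HasZeroMean fun n : ℕ => Real.cos (a * n + b * n ^ 2) * Real.sin (a * n + b * n ^ 2) := by
  have doubled_irrational : Irrational (2 * b / Real.pi) := by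
    simpa only [mul_div_assoc, Nat.cast_ofNat] using hb.natCast_mul two_ne_zero
  simpa [← im_chirp_two_mul_div_two, div_eq_inv_mul] using
    (hasZeroMean_chirp (2 * a) doubled_irrational).map ((2⁻¹ : ℝ) • Complex.imCLM)

end Chirp

theorem statement_7_general {β : ℝ} (hβ : Irrational (β / Real.pi)) (α : ℝ) {w : ℕ → ℝ}
    (hw : Monotone w) (hw₀ : 0 ≤ w 0) :
    Tendsto (fun N : ℕ =>
        (1 / (N * w N)) *
          ∑ n ∈ Icc 1 N, w n * Real.cos (α * n + β * n ^ 2) * Real.sin (α * n + β * n ^ 2))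
      atTop (nhds 0) := by
  refine ((hasZeroMean_cos_mul_sin α hβ).isLittleO_sum_range_succ_smul hw
    hw₀).tendsto_div_nhds_zero.congr fun N => ?_
  rw [range_eq_Ico, sum_eq_sum_Ico_succ_bot N.add_one_pos, zero_add, Ico_add_one_right_eq_Icc,
    div_eq_inv_mul, one_div]
  simp [mul_assoc]

/-- Weighted chirp cosine-sine cross sum limit: if `β / π` is irrational, the normalized weighted
sum of `cos (α n + β n²) sin (α n + β n²)` tends to `0`. -/
theorem statement_7 (β : ℝ) (hβ : Irrational (β / Real.pi)) (α : ℝ) (k : ℕ) :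
    Tendsto (fun N : ℕ =>
        (1 / (N : ℝ) ^ (k + 1)) *
          ∑ n ∈ Finset.Icc 1 N,
            (n : ℝ) ^ k * Real.cos (α * n + β * n ^ 2) * Real.sin (α * n + β * n ^ 2))
      atTop (nhds 0) := by
  simpa only [pow_succ'] using statement_7_general hβ α (w := fun n => (n : ℝ) ^ k)
    (fun _ _ hmn => by dsimp only; gcongr) (by positivity)
end

section
/- Let β ∈ ℝ be such that β/π is irrational, let α, A, B ∈ ℝ, and let k be a nonnegative integer. Then lim_{N→∞} (1/N^{k+1}) Σ_{n=1}^{N} n^k ( A sin(α n + β n²) − B cos(α n + β n²) )² = (A² + B²)/(2(k+1)). -/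
open Filter Finset

/-!
Since `A sin θ - B cos θ = -Re ((B + A i) e^{iθ})`, the identity `(Re w)² = (‖w‖² + Re w²) / 2`
splits its square into the constant `(A² + B²) / 2` and a multiple of `e^{2iθ}`. For a quadratic
phase with leading coefficient an irrational multiple of `π`, multiplying a shift of `e^{2iθ}` by
the conjugate of the sequence leaves a geometric progression of ratio `≠ 1`, whose partial sums are
bounded, so van der Corput's inequality shows that `e^{2iθ}` has mean zero. Summation by parts
carries the resulting Cesàro limit over to the weights `n ^ k`.
-/

open Asymptotics Topology

lemma isLittleO_one_natCast : (fun _ : ℕ ↦ (1 : ℝ)) =o[atTop] fun N : ℕ ↦ (N : ℝ) :=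
  (isLittleO_one_left_iff ℝ).2 (tendsto_norm_atTop_atTop.comp tendsto_natCast_atTop_atTop)

section VanDerCorput

lemma norm_sum_range_shift_sub_le {E : Type*} [SeminormedAddCommGroup E] {u : ℕ → E} {C : ℝ}
    (hu : ∀ n, ‖u n‖ ≤ C) (N h : ℕ) :
    ‖∑ n ∈ range N, u (n + h) - ∑ n ∈ range N, u n‖ ≤ 2 * h * C := by
  have boundary : ∑ n ∈ range N, u (n + h) - ∑ n ∈ range N, u n =
      ∑ i ∈ range h, u (N + i) - ∑ i ∈ range h, u i := by
    have split_at_N := sum_range_add u N h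
    have split_at_h := sum_range_add u h N
    rw [Nat.add_comm h N, split_at_N] at split_at_h
    simp only [Nat.add_comm _ h]
    rw [sub_eq_sub_iff_add_eq_add, add_comm, ← split_at_h, add_comm]
  have block (v : ℕ → E) (hv : ∀ n, ‖v n‖ ≤ C) : ‖∑ i ∈ range h, v i‖ ≤ h * C := by
    simpa using norm_sum_le_of_le (range h) fun i _ ↦ hv i
  calc ‖∑ n ∈ range N, u (n + h) - ∑ n ∈ range N, u n‖
      ≤ ‖∑ i ∈ range h, u (N + i)‖ + ‖∑ i ∈ range h, u i‖ := boundary ▸ norm_sub_le _ _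
    _ ≤ h * C + h * C := add_le_add (block _ fun _ ↦ hu _) (block _ hu)
    _ = 2 * h * C := by ring

lemma norm_sum_sum_range_shift_sub_le {E : Type*} [SeminormedAddCommGroup E] {u : ℕ → E} {C : ℝ}
    (hu : ∀ n, ‖u n‖ ≤ C) (N H : ℕ) :
    ‖∑ n ∈ range N, ∑ h ∈ range H, u (n + h) - H • ∑ n ∈ range N, u n‖ ≤ 2 * H ^ 2 * C := by
  have hC : 0 ≤ C := (norm_nonneg _).trans (hu 0)
  have regroup : ∑ n ∈ range N, ∑ h ∈ range H, u (n + h) - H • ∑ n ∈ range N, u n =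
      ∑ h ∈ range H, (∑ n ∈ range N, u (n + h) - ∑ n ∈ range N, u n) := by
    rw [sum_comm, sum_sub_distrib, sum_const, card_range]
  calc ‖∑ n ∈ range N, ∑ h ∈ range H, u (n + h) - H • ∑ n ∈ range N, u n‖
      ≤ ∑ _h ∈ range H, 2 * H * C := by
        rw [regroup]
        refine norm_sum_le_of_le _ fun h hh ↦ (norm_sum_range_shift_sub_le hu N h).trans ?_
        have : (h : ℝ) ≤ H := mod_cast (mem_range.1 hh).le
        gcongr
    _ = 2 * H ^ 2 * C := by
        rw [sum_const, card_range, nsmul_eq_mul]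
        ring

variable {𝕜 E : Type*} [RCLike 𝕜] [NormedAddCommGroup E] [InnerProductSpace 𝕜 E] {u : ℕ → E}
  {C : ℝ}

variable (𝕜) in
lemma norm_sum_sq_eq_sum_add_sum_offDiag {ι : Type*} (s : Finset ι) (v : ι → E) :
    ‖∑ i ∈ s, v i‖ ^ 2 =
      ∑ i ∈ s, ‖v i‖ ^ 2 + ∑ p ∈ s.offDiag, RCLike.re (inner 𝕜 (v p.1) (v p.2)) := by
  classical
  rw [← inner_self_eq_norm_sq (𝕜 := 𝕜), sum_inner]
  simp only [inner_sum, map_sum]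
  rw [← sum_product', ← diag_union_offDiag, sum_union (disjoint_diag_offDiag _), sum_diag]
  simp only [inner_self_eq_norm_sq]

lemma isLittleO_sum_inner_shift (hu : ∀ n, ‖u n‖ ≤ C)
    (hcorr : ∀ h, 0 < h →
      (fun N ↦ ∑ n ∈ range N, inner 𝕜 (u n) (u (n + h))) =o[atTop] fun N : ℕ ↦ (N : ℝ))
    {i j : ℕ} (hij : i ≠ j) :
    (fun N ↦ ∑ n ∈ range N, inner 𝕜 (u (n + i)) (u (n + j))) =o[atTop] fun N : ℕ ↦ (N : ℝ) := by
  wlog hlt : i < j generalizing i j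
  · refine (isBigO_of_le _ fun N ↦ ?_).trans_isLittleO
      (this hij.symm (hij.lt_or_gt.resolve_left hlt))
    rw [← RCLike.norm_conj, map_sum]
    simp only [inner_conj_symm, le_refl]
  obtain ⟨d, hd, rfl⟩ := exists_pos_add_of_lt' hlt
  have inner_le (n : ℕ) : ‖inner 𝕜 (u n) (u (n + d))‖ ≤ C * C :=
    (norm_inner_le_norm _ _).trans
      (mul_le_mul (hu _) (hu _) (norm_nonneg _) ((norm_nonneg _).trans (hu 0)))
  have shift_isLittleO : (fun N ↦ ∑ n ∈ range N, inner 𝕜 (u (n + i)) (u (n + i + d)) -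
      ∑ n ∈ range N, inner 𝕜 (u n) (u (n + d))) =o[atTop] fun N : ℕ ↦ (N : ℝ) :=
    (IsBigO.of_bound (2 * i * (C * C)) (.of_forall fun N ↦ by
      simpa using norm_sum_range_shift_sub_le inner_le N i)).trans_isLittleO isLittleO_one_natCast
  simpa only [sub_add_cancel, add_assoc] using shift_isLittleO.add (hcorr d hd)

lemma eventually_sum_norm_sq_window_le (hu : ∀ n, ‖u n‖ ≤ C)
    (hcorr : ∀ h, 0 < h →
      (fun N ↦ ∑ n ∈ range N, inner 𝕜 (u n) (u (n + h))) =o[atTop] fun N : ℕ ↦ (N : ℝ))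
    (H : ℕ) :
    ∀ᶠ N : ℕ in atTop,
      ∑ n ∈ range N, ‖∑ h ∈ range H, u (n + h)‖ ^ 2 ≤ (H * C ^ 2 + 1) * N := by
  have offDiag_isLittleO : (fun N : ℕ ↦ ∑ p ∈ (range H).offDiag,
      ∑ n ∈ range N, inner 𝕜 (u (n + p.1)) (u (n + p.2))) =o[atTop] fun N : ℕ ↦ (N : ℝ) :=
    IsLittleO.fun_sum fun p hp ↦ isLittleO_sum_inner_shift hu hcorr (mem_offDiag.1 hp).2.2
  filter_upwards [offDiag_isLittleO.bound one_pos] with N hN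
  have diag_le : ∑ h ∈ range H, ∑ n ∈ range N, ‖u (n + h)‖ ^ 2 ≤ H * (N * C ^ 2) := by
    simpa using sum_le_sum fun h (_ : h ∈ range H) ↦ sum_le_sum fun n (_ : n ∈ range N) ↦
      pow_le_pow_left₀ (norm_nonneg _) (hu (n + h)) 2
  have expand : ∑ n ∈ range N, ‖∑ h ∈ range H, u (n + h)‖ ^ 2 =
      ∑ h ∈ range H, ∑ n ∈ range N, ‖u (n + h)‖ ^ 2 + RCLike.re (∑ p ∈ (range H).offDiag,
        ∑ n ∈ range N, inner 𝕜 (u (n + p.1)) (u (n + p.2))) := by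
    simp only [norm_sum_sq_eq_sum_add_sum_offDiag 𝕜, sum_add_distrib, map_sum]
    rw [sum_comm, sum_comm (s := range N)]
  calc ∑ n ∈ range N, ‖∑ h ∈ range H, u (n + h)‖ ^ 2
      ≤ H * (N * C ^ 2) + 1 * ‖(N : ℝ)‖ :=
        expand ▸ add_le_add diag_le ((RCLike.re_le_norm _).trans hN)
    _ = (H * C ^ 2 + 1) * N := by
        rw [Real.norm_natCast]
        ring

lemma eventually_norm_sum_sum_window_le (hu : ∀ n, ‖u n‖ ≤ C)
    (hcorr : ∀ h, 0 < h →
      (fun N ↦ ∑ n ∈ range N, inner 𝕜 (u n) (u (n + h))) =o[atTop] fun N : ℕ ↦ (N : ℝ))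
    (H : ℕ) :
    ∀ᶠ N : ℕ in atTop,
      ‖∑ n ∈ range N, ∑ h ∈ range H, u (n + h)‖ ≤ √(H * C ^ 2 + 1) * N := by
  filter_upwards [eventually_sum_norm_sq_window_le hu hcorr H] with N hN
  refine le_of_sq_le_sq ?_ (by positivity)
  calc ‖∑ n ∈ range N, ∑ h ∈ range H, u (n + h)‖ ^ 2
      ≤ (∑ n ∈ range N, ‖∑ h ∈ range H, u (n + h)‖) ^ 2 := by
        gcongr
        exact norm_sum_le _ _
    _ ≤ N * ∑ n ∈ range N, ‖∑ h ∈ range H, u (n + h)‖ ^ 2 := by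
        simpa using sq_sum_le_card_mul_sum_sq (s := range N)
          (f := fun n ↦ ‖∑ h ∈ range H, u (n + h)‖)
    _ ≤ N * ((H * C ^ 2 + 1) * N) := by gcongr
    _ = (√(H * C ^ 2 + 1) * N) ^ 2 := by
        rw [mul_pow, Real.sq_sqrt (by positivity)]
        ring

lemma exists_pos_sqrt_mul_add_one_le (b : ℝ) {ε : ℝ} (hε : 0 < ε) :
    ∃ H : ℕ, √(H * b + 1) ≤ H * ε ∧ 0 < H := by
  obtain ⟨H, hH0, hH⟩ := ((eventually_gt_atTop 0).and
    (tendsto_natCast_atTop_atTop.eventually_ge_atTop ((b + 1) / ε ^ 2))).exists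
  rw [div_le_iff₀ (by positivity)] at hH
  have one_le_H : (1 : ℝ) ≤ H := mod_cast hH0
  refine ⟨H, Real.sqrt_le_iff.2 ⟨by positivity, ?_⟩, hH0⟩
  calc H * b + 1 ≤ H * (b + 1) := by linarith
    _ ≤ H * (H * ε ^ 2) := by gcongr
    _ = (H * ε) ^ 2 := by ring

theorem isLittleO_sum_range_of_isLittleO_sum_inner (hu : ∀ n, ‖u n‖ ≤ C)
    (hcorr : ∀ h, 0 < h →
      (fun N ↦ ∑ n ∈ range N, inner 𝕜 (u n) (u (n + h))) =o[atTop] fun N : ℕ ↦ (N : ℝ)) :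
    (fun N ↦ ∑ n ∈ range N, u n) =o[atTop] fun N : ℕ ↦ (N : ℝ) := by
  refine isLittleO_iff.2 fun ε hε ↦ ?_
  obtain ⟨H, hH, hH0⟩ := exists_pos_sqrt_mul_add_one_le (C ^ 2) (half_pos hε)
  filter_upwards [eventually_norm_sum_sum_window_le hu hcorr H,
    tendsto_natCast_atTop_atTop.eventually_ge_atTop (4 * H * C / ε)] with N window_le hN
  rw [div_le_iff₀ hε] at hN
  rw [Real.norm_natCast]
  have hH0' : (0 : ℝ) < H := mod_cast hH0
  refine le_of_mul_le_mul_left ?_ hH0'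
  set S := ∑ n ∈ range N, u n
  set T := ∑ n ∈ range N, ∑ h ∈ range H, u (n + h)
  calc H * ‖S‖ = ‖T - (T - H • S)‖ := by
        rw [sub_sub_cancel, RCLike.norm_nsmul 𝕜, nsmul_eq_mul]
    _ ≤ √(H * C ^ 2 + 1) * N + 2 * H ^ 2 * C :=
        (norm_sub_le _ _).trans
          (add_le_add window_le (norm_sum_sum_range_shift_sub_le hu N H))
    _ ≤ H * (ε / 2) * N + 2 * H ^ 2 * C := by gcongr
    _ = H * (ε / 2) * N + H / 2 * (4 * H * C) := by ring
    _ ≤ H * (ε / 2) * N + H / 2 * (N * ε) := by gcongr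
    _ = H * (ε * N) := by ring

end VanDerCorput

section QuadraticPhase

lemma isBigO_one_geom_sum {𝕜 : Type*} [NormedField 𝕜] {w : 𝕜} (hw : ‖w‖ ≤ 1) (hw1 : w ≠ 1) :
    (fun N : ℕ ↦ ∑ n ∈ range N, w ^ n) =O[atTop] fun _ ↦ (1 : ℝ) := by
  refine IsBigO.of_bound (2 / ‖w - 1‖) (.of_forall fun N ↦ ?_)
  rw [geom_sum_eq hw1, norm_div, norm_one, mul_one]
  gcongr
  calc ‖w ^ N - 1‖ ≤ ‖w‖ ^ N + ‖(1 : 𝕜)‖ := (norm_sub_le _ _).trans_eq (by rw [norm_pow])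
    _ ≤ 1 + 1 := add_le_add (pow_le_one₀ (norm_nonneg _) hw) norm_one.le
    _ = 2 := one_add_one_eq_two

lemma exp_mul_I_ne_one_of_irrational {θ : ℝ} (hθ : Irrational (θ / Real.pi)) :
    Complex.exp (θ * Complex.I) ≠ 1 := by
  intro hexp
  obtain ⟨m, hm⟩ := Complex.exp_eq_one_iff.1 hexp
  have hθm : θ = m * (2 * Real.pi) := by
    have : (θ : ℂ) = m * (2 * Real.pi) :=
      mul_right_cancel₀ Complex.I_ne_zero (hm.trans (mul_assoc _ _ _).symm)
    exact_mod_cast this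
  refine hθ.ne_int (2 * m) ?_
  rw [hθm]
  push_cast
  field_simp [Real.pi_ne_zero]

theorem isLittleO_sum_exp_quadratic (a b : ℝ) {c : ℝ} (hc : Irrational (c / Real.pi)) :
    (fun N : ℕ ↦ ∑ n ∈ range N, Complex.exp ((a + b * n + c * n ^ 2 : ℝ) * Complex.I))
      =o[atTop] fun N : ℕ ↦ (N : ℝ) := by
  refine isLittleO_sum_range_of_isLittleO_sum_inner (𝕜 := ℂ)
    (fun n ↦ (Complex.norm_exp_ofReal_mul_I _).le) fun h hh ↦ ?_
  have ratio_ne_one : Complex.exp ((2 * c * h : ℝ) * Complex.I) ≠ 1 := by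
    refine exp_mul_I_ne_one_of_irrational ?_
    convert! hc.mul_natCast (m := 2 * h) (by positivity) using 1
    push_cast
    ring
  have correlation (n : ℕ) :
      inner ℂ (Complex.exp ((a + b * n + c * n ^ 2 : ℝ) * Complex.I))
        (Complex.exp ((a + b * (n + h : ℕ) + c * (n + h : ℕ) ^ 2 : ℝ) * Complex.I)) =
      Complex.exp ((b * h + c * h ^ 2 : ℝ) * Complex.I) *
        Complex.exp ((2 * c * h : ℝ) * Complex.I) ^ n := by
    rw [RCLike.inner_apply, ← Complex.exp_conj, ← Complex.exp_nat_mul, ← Complex.exp_add,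
      ← Complex.exp_add, map_mul, Complex.conj_I, Complex.conj_ofReal]
    push_cast
    ring_nf
  simp only [correlation, ← mul_sum]
  exact ((isBigO_one_geom_sum (Complex.norm_exp_ofReal_mul_I _).le
    ratio_ne_one).trans_isLittleO isLittleO_one_natCast).const_mul_left _

end QuadraticPhase

section WeightedMeans

lemma exists_forall_norm_le_mul_add {E : Type*} [SeminormedAddCommGroup E] {f : ℕ → E}
    (hf : f =o[atTop] fun N : ℕ ↦ (N : ℝ)) {ε : ℝ} (hε : 0 < ε) :
    ∃ K, ∀ N, ‖f N‖ ≤ ε * N + K := by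
  have eventually_le : ∀ᶠ N in atTop, ‖f N‖ - ε * N ≤ 0 := by
    filter_upwards [hf.bound hε] with N hN
    simpa using hN
  obtain ⟨K, hK⟩ := (isBoundedUnder_of_eventually_le eventually_le).bddAbove_range
  exact ⟨K, fun N ↦ sub_le_iff_le_add'.1 (hK ⟨N, rfl⟩)⟩

lemma sum_range_succ_smul_by_parts {R M : Type*} [Ring R] [AddCommGroup M] [Module R M] (w : ℕ → R)
    (u : ℕ → M) (N : ℕ) :
    ∑ n ∈ range N, w (n + 1) • u n = w N • ∑ n ∈ range N, u n -
      ∑ m ∈ range N, (w (m + 1) - w m) • ∑ n ∈ range m, u n := by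
  induction N with
  | zero => simp
  | succ N ih =>
    simp only [sum_range_succ _ N, ih, smul_add, sub_smul]
    abel

variable {E : Type*} [NormedAddCommGroup E] [NormedSpace ℝ E]

lemma norm_sum_range_smul_le_of_monotone {w : ℕ → ℝ} (hw : Monotone w) (hw0 : 0 ≤ w 0)
    {u : ℕ → E} {N : ℕ} {M : ℝ} (hM : ∀ m ≤ N, ‖∑ n ∈ range m, u n‖ ≤ M) :
    ‖∑ n ∈ range N, w (n + 1) • u n‖ ≤ 2 * w N * M := by
  have hwN : 0 ≤ w N := hw0.trans (hw N.zero_le)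
  have hM0 : 0 ≤ M := (norm_nonneg _).trans (hM N le_rfl)
  have increments : ‖∑ m ∈ range N, (w (m + 1) - w m) • ∑ n ∈ range m, u n‖ ≤
      (w N - w 0) * M := by
    rw [← sum_range_sub, sum_mul]
    refine norm_sum_le_of_le _ fun m hm ↦ ?_
    have hΔ : 0 ≤ w (m + 1) - w m := sub_nonneg.2 (hw m.le_succ)
    rw [norm_smul, Real.norm_of_nonneg hΔ]
    exact mul_le_mul_of_nonneg_left (hM m (mem_range.1 hm).le) hΔ
  calc ‖∑ n ∈ range N, w (n + 1) • u n‖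
      ≤ ‖w N • ∑ n ∈ range N, u n‖ + (w N - w 0) * M := by
        rw [sum_range_succ_smul_by_parts]
        exact (norm_sub_le _ _).trans (add_le_add_right increments _)
    _ ≤ w N * M + w N * M := by
        rw [norm_smul, Real.norm_of_nonneg hwN]
        gcongr
        · exact hM N le_rfl
        · exact sub_le_self _ hw0
    _ = 2 * w N * M := by ring

theorem isLittleO_sum_range_smul_of_monotone {w : ℕ → ℝ} (hw : Monotone w) (hw0 : 0 ≤ w 0)
    {u : ℕ → E} (hu : (fun N ↦ ∑ n ∈ range N, u n) =o[atTop] fun N : ℕ ↦ (N : ℝ)) :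
    (fun N ↦ ∑ n ∈ range N, w (n + 1) • u n) =o[atTop] fun N : ℕ ↦ N * w N := by
  refine isLittleO_iff.2 fun ε hε ↦ ?_
  obtain ⟨K, hK⟩ := exists_forall_norm_le_mul_add hu (show 0 < ε / 4 by positivity)
  filter_upwards [tendsto_natCast_atTop_atTop.eventually_ge_atTop (4 * K / ε)] with N hN
  have hwN : 0 ≤ w N := hw0.trans (hw N.zero_le)
  have hKN : K ≤ ε / 4 * N := by
    rw [div_le_iff₀ hε] at hN
    linarith
  calc ‖∑ n ∈ range N, w (n + 1) • u n‖
      ≤ 2 * w N * (ε / 4 * N + K) := by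
        refine norm_sum_range_smul_le_of_monotone hw hw0 fun m hm ↦ (hK m).trans ?_
        gcongr
    _ ≤ 2 * w N * (ε / 4 * N + ε / 4 * N) := by gcongr
    _ = ε * ‖N * w N‖ := by
        rw [Real.norm_of_nonneg (by positivity)]
        ring

lemma abs_sum_range_succ_pow_sub_le (k N : ℕ) :
    |∑ n ∈ range N, ((n + 1 : ℕ) : ℝ) ^ k - (N : ℝ) ^ (k + 1) / (k + 1)| ≤ (N : ℝ) ^ k := by
  have pow_monotone : MonotoneOn (fun x : ℝ ↦ x ^ k) (Set.Icc ((0 : ℕ) : ℝ) N) :=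
    fun x hx y _ hxy ↦ pow_le_pow_left₀ (by simpa using hx.1) hxy k
  have integral_le := pow_monotone.integral_le_sum_Ico N.zero_le
  have le_integral := pow_monotone.sum_le_integral_Ico N.zero_le
  simp only [← range_eq_Ico, integral_pow, Nat.cast_zero, zero_pow k.succ_ne_zero, sub_zero]
    at integral_le le_integral
  have telescope : ∑ n ∈ range N, ((n + 1 : ℕ) : ℝ) ^ k =
      ∑ n ∈ range N, (n : ℝ) ^ k + (N : ℝ) ^ k - (0 : ℝ) ^ k := by
    rw [← sum_range_succ (fun n : ℕ ↦ (n : ℝ) ^ k), sum_range_succ', Nat.cast_zero,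
      add_sub_cancel_right]
  have zero_pow_nonneg : (0 : ℝ) ≤ 0 ^ k := by positivity
  have : (0 : ℝ) ≤ (N : ℝ) ^ k := by positivity
  exact abs_le.2 ⟨by linarith, by linarith⟩

lemma tendsto_sum_range_succ_pow_div (k : ℕ) :
    Tendsto (fun N : ℕ ↦ ((N : ℝ) ^ (k + 1))⁻¹ * ∑ n ∈ range N, ((n + 1 : ℕ) : ℝ) ^ k) atTop
      (𝓝 ((k : ℝ) + 1)⁻¹) := by
  refine tendsto_iff_norm_sub_tendsto_zero.2 (squeeze_zero' (.of_forall fun _ ↦ norm_nonneg _) ?_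
    tendsto_inv_atTop_nhds_zero_nat)
  filter_upwards [eventually_gt_atTop 0] with N hN
  have hN' : (0 : ℝ) < N := mod_cast hN
  set P := ∑ n ∈ range N, ((n + 1 : ℕ) : ℝ) ^ k
  calc ‖((N : ℝ) ^ (k + 1))⁻¹ * P - ((k : ℝ) + 1)⁻¹‖
      = ‖(P - (N : ℝ) ^ (k + 1) / (k + 1)) / (N : ℝ) ^ (k + 1)‖ := by
        congr 1
        field_simp
    _ = |P - (N : ℝ) ^ (k + 1) / (k + 1)| / (N : ℝ) ^ (k + 1) := by
        rw [norm_div, Real.norm_eq_abs, Real.norm_of_nonneg (pow_pos hN' _).le]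
    _ ≤ (N : ℝ) ^ k / (N : ℝ) ^ (k + 1) := by
        gcongr
        exact abs_sum_range_succ_pow_sub_le k N
    _ = (N : ℝ)⁻¹ := by rw [pow_succ, div_mul_cancel_left₀ (pow_pos hN' k).ne']

lemma tendsto_mean_iff_isLittleO_sum_sub {x : ℕ → E} {a : E} :
    Tendsto (fun N : ℕ ↦ (N : ℝ)⁻¹ • ∑ n ∈ range N, x n) atTop (𝓝 a) ↔
      (fun N ↦ ∑ n ∈ range N, (x n - a)) =o[atTop] fun N : ℕ ↦ (N : ℝ) := by
  have eventually_ne : ∀ᶠ N : ℕ in atTop, (N : ℝ) ≠ 0 := by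
    filter_upwards [eventually_ne_atTop 0] with N hN using mod_cast hN
  rw [← isLittleO_norm_left, isLittleO_iff_tendsto' (eventually_ne.mono fun _ hN h ↦ absurd h hN),
    tendsto_iff_norm_sub_tendsto_zero]
  refine tendsto_congr' (eventually_ne.mono fun N hN ↦ ?_)
  calc ‖(N : ℝ)⁻¹ • ∑ n ∈ range N, x n - a‖
      = ‖(N : ℝ)⁻¹ • ∑ n ∈ range N, (x n - a)‖ := by
        rw [sum_sub_distrib, sum_const, card_range, ← Nat.cast_smul_eq_nsmul ℝ, smul_sub,
          inv_smul_smul₀ hN]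
    _ = ‖∑ n ∈ range N, (x n - a)‖ / N := by
        rw [norm_smul, norm_inv, Real.norm_natCast, inv_mul_eq_div]

theorem tendsto_sum_range_succ_pow_smul {x : ℕ → E} {a : E}
    (hx : Tendsto (fun N : ℕ ↦ (N : ℝ)⁻¹ • ∑ n ∈ range N, x n) atTop (𝓝 a)) (k : ℕ) :
    Tendsto (fun N : ℕ ↦ ((N : ℝ) ^ (k + 1))⁻¹ • ∑ n ∈ range N, ((n + 1 : ℕ) : ℝ) ^ k • x n) atTop
      (𝓝 (((k : ℝ) + 1)⁻¹ • a)) := by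
  have fluctuation : (fun N ↦ ∑ n ∈ range N, ((n + 1 : ℕ) : ℝ) ^ k • (x n - a))
      =o[atTop] fun N : ℕ ↦ (N : ℝ) ^ (k + 1) := by
    simpa only [pow_succ'] using isLittleO_sum_range_smul_of_monotone
      (w := fun n : ℕ ↦ (n : ℝ) ^ k)
      (fun m n hmn ↦ pow_le_pow_left₀ m.cast_nonneg (mod_cast hmn) k) (by positivity)
      (tendsto_mean_iff_isLittleO_sum_sub.1 hx)
  have limit :=
    fluctuation.tendsto_inv_smul_nhds_zero.add ((tendsto_sum_range_succ_pow_div k).smul_const a)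
  rw [zero_add] at limit
  refine limit.congr fun N ↦ ?_
  rw [mul_smul, ← smul_add, sum_smul, ← sum_add_distrib]
  simp only [← smul_add, sub_add_cancel]

end WeightedMeans

lemma sq_mul_sin_sub_mul_cos (A B θ : ℝ) :
    (A * Real.sin θ - B * Real.cos θ) ^ 2 = (A ^ 2 + B ^ 2) / 2 +
      ((B + A * Complex.I) ^ 2 / 2 * Complex.exp ((2 * θ : ℝ) * Complex.I)).re := by
  have coeff : (B + A * Complex.I) ^ 2 / 2 = ⟨(B ^ 2 - A ^ 2) / 2, A * B⟩ := by
    apply Complex.ext <;> simp [pow_two]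
    ring
  rw [coeff, Complex.mul_re, Complex.exp_ofReal_mul_I_re, Complex.exp_ofReal_mul_I_im,
    Real.sin_two_mul, Real.cos_two_mul]
  linear_combination A ^ 2 * Real.sin_sq_add_cos_sq θ

theorem tendsto_mean_sq_mul_sin_sub_mul_cos (A B : ℝ) {θ : ℕ → ℝ}
    (hθ : (fun N ↦ ∑ n ∈ range N, Complex.exp ((2 * θ n : ℝ) * Complex.I))
      =o[atTop] fun N : ℕ ↦ (N : ℝ)) :
    Tendsto (fun N : ℕ ↦ (N : ℝ)⁻¹ •
      ∑ n ∈ range N, (A * Real.sin (θ n) - B * Real.cos (θ n)) ^ 2) atTop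
      (𝓝 ((A ^ 2 + B ^ 2) / 2)) := by
  refine tendsto_mean_iff_isLittleO_sum_sub.2 ?_
  simp only [sq_mul_sin_sub_mul_cos, add_sub_cancel_left, ← Complex.re_sum, ← mul_sum]
  exact (isBigO_of_le _ fun N ↦ Complex.abs_re_le_norm _).trans_isLittleO (hθ.const_mul_left _)

/-- Weighted limit of the squared phase-derivative term of a chirp component. -/
theorem statement_8 (β : ℝ) (hβ : Irrational (β / Real.pi)) (α A B : ℝ) (k : ℕ) :
    Tendsto (fun N : ℕ =>
        (1 / (N : ℝ) ^ (k + 1)) *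
          ∑ n ∈ Finset.Icc 1 N,
            (n : ℝ) ^ k *
              (A * Real.sin (α * n + β * n ^ 2) - B * Real.cos (α * n + β * n ^ 2)) ^ 2)
      atTop (nhds ((A ^ 2 + B ^ 2) / (2 * ((k : ℝ) + 1)))) := by
  have mean_zero : (fun N ↦ ∑ n ∈ range N, Complex.exp
      ((2 * (α * (n + 1 : ℕ) + β * (n + 1 : ℕ) ^ 2) : ℝ) * Complex.I))
      =o[atTop] fun N : ℕ ↦ (N : ℝ) := by
    have h2β : Irrational (2 * β / Real.pi) := by
      simpa [mul_div_assoc] using hβ.natCast_mul two_ne_zero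
    convert! isLittleO_sum_exp_quadratic (2 * (α + β)) (2 * (α + 2 * β)) h2β using 6
    push_cast
    ring
  convert! tendsto_sum_range_succ_pow_smul
    (tendsto_mean_sq_mul_sin_sub_mul_cos A B mean_zero) k using 2 with N
  · rw [one_div, smul_eq_mul, range_eq_Ico, sum_Ico_add' (fun n : ℕ ↦ (n : ℝ) ^ k •
      (A * Real.sin (α * n + β * n ^ 2) - B * Real.cos (α * n + β * n ^ 2)) ^ 2) 0 N 1,
      zero_add, Ico_add_one_right_eq_Icc]
    rfl
  · rw [smul_eq_mul]
    field_simp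
end
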